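/- arXiv:2409.16963 — 2 statements merged into one kernel-verified Lean document; each statement's English description precedes it below -/
import Mathlib

section
/- Let β(x) = (1+x)^{-1} (the t-SNE case). Let Y(t) be a solution of the gradient flow of the relative entropy with Σ_{i=1}^n y_i(t) = 0 for all t, and set S(t) = Σ_{i=1}^n |y_i(t)|². Then there exist constants C' > 0 and C > 0 (independent of t) such that for every t ≥ 0 with S(t) ≥ C', one has dS/dt (t) ≤ C / S(t). -/
open Filter Topology

/-- The normalizing constant `Z = Σ_{k ≠ ℓ} β(|y_k - y_ℓ|²)`. -/
noncomputable def pairZ {E : Type*} [NormedAddCommGroup E] (β : ℝ → ℝ) {n : ℕ}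
    (Y : Fin n → E) : ℝ :=
  ∑ k : Fin n, ∑ l : Fin n, if k ≠ l then β (‖Y k - Y l‖ ^ 2) else 0

/-- The low-dimensional similarity `q_{ij}(Y) = β(|y_i - y_j|²) / Z(Y)`. -/
noncomputable def qfun {E : Type*} [NormedAddCommGroup E] (β : ℝ → ℝ) {n : ℕ}
    (Y : Fin n → E) (i j : Fin n) : ℝ :=
  β (‖Y i - Y j‖ ^ 2) / pairZ β Y

/-- The derivative `(log β)'` on `[0, ∞)`. -/
noncomputable def lbd (β : ℝ → ℝ) : ℝ → ℝ :=
  fun x => derivWithin (fun y => Real.log (β y)) (Set.Ici 0) x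

/-- `Y : ℝ → Fin n → E` is a solution of the gradient flow of the relative entropy:
`dy_i/dt = 4 Σ_{j ≠ i} (p_{ij} - q_{ij}(Y)) (y_i - y_j) (log β)'(|y_i - y_j|²)` for `t ≥ 0`. -/
def IsGradFlow {E : Type*} [NormedAddCommGroup E] [NormedSpace ℝ E] (β : ℝ → ℝ) {n : ℕ}
    (p : Fin n → Fin n → ℝ) (Y : ℝ → Fin n → E) : Prop :=
  ∀ i : Fin n, ∀ t ∈ Set.Ici (0 : ℝ),
    HasDerivWithinAt (fun u => Y u i)
      (∑ j ∈ Finset.univ.filter (· ≠ i),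
        (4 * (p i j - qfun β (Y t) i j) * lbd β (‖Y t i - Y t j‖ ^ 2)) • (Y t i - Y t j))
      (Set.Ici 0) t

/-- The diameter of the configuration `Y`, i.e. `max_{i,j} |y_i - y_j|`. -/
noncomputable def diamY {E : Type*} [NormedAddCommGroup E] {n : ℕ} (Y : Fin n → E) : ℝ :=
  Metric.diam (Set.range Y)

/-!
Up to an additive constant the relative entropy is the cross entropy `-∑ p_{ij} log q_{ij}`, a sum
of nonnegative terms which decreases along its gradient flow. Hence every `q_{ij}` with `i ≠ j`
stays bounded away from zero. For `β(x) = (1 + x)⁻¹` this says that `Z (1 + |y_i - y_j|²)` is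
bounded, so `Z S` is bounded because the center of mass is conserved. On the other hand
`x β(x) = 1 - β(x)` together with `∑ p_{ij} = ∑ q_{ij}` gives
`dS/dt = 4 ∑ (p_{ij} - q_{ij}) β(|y_i - y_j|²) ≤ 4 Z`.
-/

section PairSums

variable {ι M : Type*} [Fintype ι]

lemma sum_offDiag_eq_sum_sum_ite [DecidableEq ι] [AddCommMonoid M] (f : ι → ι → M) :
    ∑ e ∈ Finset.univ.offDiag, f e.1 e.2 = ∑ i, ∑ j, if i ≠ j then f i j else 0 := by
  rw [← Fintype.sum_prod_type' fun i j => if i ≠ j then f i j else 0, ← Finset.sum_filter]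
  exact Finset.sum_congr (by ext; simp) fun _ _ => rfl

lemma sum_sum_eq_sum_offDiag [AddCommMonoid M] (f : ι → ι → M)
    (hf : ∀ i, f i i = 0) : ∑ i, ∑ j, f i j = ∑ e ∈ Finset.univ.offDiag, f e.1 e.2 := by
  classical
  rw [sum_offDiag_eq_sum_sum_ite]
  refine Fintype.sum_congr _ _ fun i => Fintype.sum_congr _ _ fun j => ?_
  split_ifs with hij
  · rfl
  · rw [← not_ne_iff.1 hij, hf]

variable {E : Type*} [NormedAddCommGroup E]

lemma sum_sum_smul_sub_eq_zero [NormedSpace ℝ E] {w : ι → ι → ℝ} (hw : ∀ i j, w i j = w j i)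
    (y : ι → E) : ∑ i, ∑ j, w i j • (y i - y j) = 0 := by
  simp_rw [smul_sub, Finset.sum_sub_distrib]
  rw [sub_eq_zero, Finset.sum_comm]
  simp_rw [hw]

variable [InnerProductSpace ℝ E]

lemma sum_sum_mul_inner_sub_sub {w : ι → ι → ℝ} (hw : ∀ i j, w i j = w j i) (y v : ι → E) :
    ∑ i, ∑ j, w i j * inner ℝ (y i - y j) (v i - v j)
      = 2 * ∑ i, inner ℝ (∑ j, w i j • (y i - y j)) (v i) := by
  have hswap : ∑ i, ∑ j, w i j * inner ℝ (y i - y j) (v j)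
      = -∑ i, ∑ j, w i j * inner ℝ (y i - y j) (v i) := by
    rw [Finset.sum_comm]
    simp_rw [← Finset.sum_neg_distrib]
    refine Fintype.sum_congr _ _ fun i => Fintype.sum_congr _ _ fun j => ?_
    rw [hw j i, ← neg_sub (y i) (y j), inner_neg_left, mul_neg]
  simp_rw [sum_inner, real_inner_smul_left, inner_sub_right, mul_sub, Finset.sum_sub_distrib]
  rw [hswap]
  ring

lemma sum_sum_norm_sub_sq (y : ι → E) :
    ∑ i, ∑ j, ‖y i - y j‖ ^ 2 = 2 * (Fintype.card ι * ∑ i, ‖y i‖ ^ 2 - ‖∑ i, y i‖ ^ 2) := by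
  have hinner : ∑ i, ∑ j, inner ℝ (y i) (y j) = ‖∑ i, y i‖ ^ 2 := by
    simp_rw [← inner_sum, ← sum_inner, real_inner_self_eq_norm_sq]
  simp_rw [norm_sub_sq_real, Finset.sum_add_distrib, Finset.sum_sub_distrib, ← Finset.mul_sum,
    hinner, Finset.sum_const, Finset.card_univ, nsmul_eq_mul, ← Finset.mul_sum]
  ring

end PairSums

section Similarities

variable {E : Type*} [NormedAddCommGroup E] {β : ℝ → ℝ} {n : ℕ} (Y : Fin n → E)

lemma pairZ_eq_sum_offDiag (β : ℝ → ℝ) :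
    pairZ β Y = ∑ e ∈ Finset.univ.offDiag, β (‖Y e.1 - Y e.2‖ ^ 2) :=
  (sum_offDiag_eq_sum_sum_ite fun i j => β (‖Y i - Y j‖ ^ 2)).symm

lemma qfun_comm (β : ℝ → ℝ) (i j : Fin n) : qfun β Y i j = qfun β Y j i := by
  rw [qfun, qfun, norm_sub_rev]

variable (hβ : ∀ x, 0 ≤ x → 0 < β x)
include hβ

lemma kernel_le_pairZ {i j : Fin n} (hij : i ≠ j) : β (‖Y i - Y j‖ ^ 2) ≤ pairZ β Y := by
  rw [pairZ_eq_sum_offDiag]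
  exact Finset.single_le_sum (f := fun e : Fin n × Fin n => β (‖Y e.1 - Y e.2‖ ^ 2)) (a := (i, j))
    (fun e _ => (hβ _ (sq_nonneg _)).le) (by simpa using hij)

lemma pairZ_pos [Nontrivial (Fin n)] : 0 < pairZ β Y := by
  obtain ⟨i, j, hij⟩ := exists_pair_ne (Fin n)
  exact (hβ _ (sq_nonneg _)).trans_le (kernel_le_pairZ Y hβ hij)

lemma qfun_pos [Nontrivial (Fin n)] (i j : Fin n) : 0 < qfun β Y i j :=
  div_pos (hβ _ (sq_nonneg _)) (pairZ_pos Y hβ)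

lemma qfun_le_one [Nontrivial (Fin n)] {i j : Fin n} (hij : i ≠ j) : qfun β Y i j ≤ 1 :=
  (div_le_one (pairZ_pos Y hβ)).2 (kernel_le_pairZ Y hβ hij)

lemma sum_qfun_eq_one [Nontrivial (Fin n)] :
    ∑ e ∈ Finset.univ.offDiag, qfun β Y e.1 e.2 = 1 := by
  simp_rw [qfun, ← Finset.sum_div, ← pairZ_eq_sum_offDiag]
  exact div_self (pairZ_pos Y hβ).ne'

end Similarities

section CrossEntropy

/-- The cross entropy `-∑_{i ≠ j} p_{ij} log q_{ij}(Y)`, which differs from the relative entropy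
of `p` with respect to `q(Y)` by the entropy of `p`, a constant. -/
noncomputable def crossEntropy {E : Type*} [NormedAddCommGroup E] (β : ℝ → ℝ) {n : ℕ}
    (p : Fin n → Fin n → ℝ) (Y : Fin n → E) : ℝ :=
  ∑ e ∈ Finset.univ.offDiag, p e.1 e.2 * -Real.log (qfun β Y e.1 e.2)

variable {E : Type*} [NormedAddCommGroup E] {β : ℝ → ℝ} {n : ℕ} [Nontrivial (Fin n)]
  {p : Fin n → Fin n → ℝ} (Y : Fin n → E) (hβ : ∀ x, 0 ≤ x → 0 < β x)
include hβ

lemma crossEntropy_eq_log_pairZ_sub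
    (hpsum : ∑ e ∈ Finset.univ.offDiag, p e.1 e.2 = 1) :
    crossEntropy β p Y = Real.log (pairZ β Y)
      - ∑ e ∈ Finset.univ.offDiag, p e.1 e.2 * Real.log (β (‖Y e.1 - Y e.2‖ ^ 2)) := by
  have hlog (e : Fin n × Fin n) : Real.log (qfun β Y e.1 e.2)
      = Real.log (β (‖Y e.1 - Y e.2‖ ^ 2)) - Real.log (pairZ β Y) :=
    Real.log_div (hβ _ (sq_nonneg _)).ne' (pairZ_pos Y hβ).ne'
  simp_rw [crossEntropy, hlog, neg_sub, mul_sub, Finset.sum_sub_distrib, ← Finset.sum_mul, hpsum,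
    one_mul]

lemma exp_neg_crossEntropy_div_le_qfun (hp : ∀ i j, i ≠ j → 0 ≤ p i j) {i j : Fin n}
    (hij : i ≠ j) (hpij : 0 < p i j) : Real.exp (-crossEntropy β p Y / p i j) ≤ qfun β Y i j := by
  have hterm : p i j * -Real.log (qfun β Y i j) ≤ crossEntropy β p Y :=
    Finset.single_le_sum
      (f := fun e : Fin n × Fin n => p e.1 e.2 * -Real.log (qfun β Y e.1 e.2)) (a := (i, j))
      (fun e he => by
        have hne : e.1 ≠ e.2 := (Finset.mem_offDiag.1 he).2.2
        exact mul_nonneg (hp _ _ hne)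
          (neg_nonneg.2 (Real.log_nonpos (qfun_pos Y hβ _ _).le (qfun_le_one Y hβ hne))))
      (by simpa using hij)
  rw [← Real.le_log_iff_exp_le (qfun_pos Y hβ i j), div_le_iff₀ hpij]
  linarith

end CrossEntropy

section Gradient

/-- The coefficient `4 (p_{ij} - q_{ij}) (log β)'(|y_i - y_j|²)` of `y_i - y_j` in the velocity
of `y_i`. -/
noncomputable def flowCoeff {E : Type*} [NormedAddCommGroup E] (β : ℝ → ℝ) {n : ℕ}
    (p : Fin n → Fin n → ℝ) (Y : Fin n → E) (i j : Fin n) : ℝ :=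
  4 * (p i j - qfun β Y i j) * lbd β (‖Y i - Y j‖ ^ 2)

/-- The velocity of `y_i` under the gradient flow of the relative entropy. The sum may include
`j = i`, where `y_i - y_j` vanishes. -/
noncomputable def flowVelocity {E : Type*} [NormedAddCommGroup E] [NormedSpace ℝ E] (β : ℝ → ℝ)
    {n : ℕ} (p : Fin n → Fin n → ℝ) (Y : Fin n → E) (i : Fin n) : E :=
  ∑ j, flowCoeff β p Y i j • (Y i - Y j)

lemma flowCoeff_comm {E : Type*} [NormedAddCommGroup E] {β : ℝ → ℝ} {n : ℕ}
    {p : Fin n → Fin n → ℝ} (hsymm : ∀ i j, p i j = p j i) (Y : Fin n → E) (i j : Fin n) :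
    flowCoeff β p Y i j = flowCoeff β p Y j i := by
  rw [flowCoeff, flowCoeff, hsymm, qfun_comm, norm_sub_rev]

lemma hasDerivWithinAt_mul_lbd {β : ℝ → ℝ} {x : ℝ} (hx : 0 ≤ x) (hβx : β x ≠ 0)
    (hd : DifferentiableWithinAt ℝ β (Set.Ici 0) x) :
    HasDerivWithinAt β (β x * lbd β x) (Set.Ici 0) x := by
  have hlbd : lbd β x = derivWithin β (Set.Ici 0) x / β x :=
    (hd.hasDerivWithinAt.log hβx).derivWithin (uniqueDiffOn_Ici 0 x hx)
  rw [hlbd, mul_div_cancel₀ _ hβx]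
  exact hd.hasDerivWithinAt

variable {E : Type*} [NormedAddCommGroup E] [InnerProductSpace ℝ E] {β : ℝ → ℝ}
  (hβ : ∀ x, 0 ≤ x → 0 < β x) (hdiff : DifferentiableOn ℝ β (Set.Ici 0)) {s : Set ℝ} {t : ℝ}
include hβ hdiff

lemma hasDerivWithinAt_kernel_norm_sub_sq {y z : ℝ → E} {y' z' : E}
    (hy : HasDerivWithinAt y y' s t) (hz : HasDerivWithinAt z z' s t) :
    HasDerivWithinAt (fun u => β (‖y u - z u‖ ^ 2))
      (β (‖y t - z t‖ ^ 2) * lbd β (‖y t - z t‖ ^ 2) * (2 * inner ℝ (y t - z t) (y' - z')))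
      s t :=
  have hd : 0 ≤ ‖y t - z t‖ ^ 2 := sq_nonneg _
  HasDerivWithinAt.comp (h₂ := β) t (hasDerivWithinAt_mul_lbd hd (hβ _ hd).ne' (hdiff _ hd))
    (hy.sub hz).norm_sq fun u _ => sq_nonneg ‖y u - z u‖

variable {n : ℕ} [Nontrivial (Fin n)] {p : Fin n → Fin n → ℝ} {Y : ℝ → Fin n → E} {Y' : Fin n → E}

lemma hasDerivWithinAt_log_pairZ (hY : ∀ i, HasDerivWithinAt (fun u => Y u i) (Y' i) s t) :
    HasDerivWithinAt (fun u => Real.log (pairZ β (Y u)))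
      (∑ e ∈ Finset.univ.offDiag, qfun β (Y t) e.1 e.2 *
        (lbd β (‖Y t e.1 - Y t e.2‖ ^ 2) * (2 * inner ℝ (Y t e.1 - Y t e.2) (Y' e.1 - Y' e.2))))
      s t := by
  have hZ : HasDerivWithinAt
      (fun u => ∑ e ∈ Finset.univ.offDiag, β (‖Y u e.1 - Y u e.2‖ ^ 2)) _ s t :=
    HasDerivWithinAt.fun_sum fun e _ =>
      hasDerivWithinAt_kernel_norm_sub_sq hβ hdiff (hY e.1) (hY e.2)
  simp_rw [← pairZ_eq_sum_offDiag] at hZ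
  refine (hZ.log (pairZ_pos (Y t) hβ).ne').congr_deriv ?_
  rw [Finset.sum_div]
  exact Finset.sum_congr rfl fun e _ => by rw [qfun]; ring

theorem hasDerivWithinAt_crossEntropy (hsymm : ∀ i j, p i j = p j i)
    (hpsum : ∑ e ∈ Finset.univ.offDiag, p e.1 e.2 = 1)
    (hY : ∀ i, HasDerivWithinAt (fun u => Y u i) (Y' i) s t) :
    HasDerivWithinAt (fun u => crossEntropy β p (Y u))
      (-∑ i, inner ℝ (flowVelocity β p (Y t) i) (Y' i)) s t := by
  simp_rw [crossEntropy_eq_log_pairZ_sub _ hβ hpsum]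
  have hpair : HasDerivWithinAt
      (fun u => ∑ e ∈ Finset.univ.offDiag, p e.1 e.2 * Real.log (β (‖Y u e.1 - Y u e.2‖ ^ 2))) _
      s t :=
    HasDerivWithinAt.fun_sum fun e _ =>
      ((hasDerivWithinAt_kernel_norm_sub_sq hβ hdiff (hY e.1) (hY e.2)).log
        (hβ _ (sq_nonneg _)).ne').const_mul (p e.1 e.2)
  refine ((hasDerivWithinAt_log_pairZ hβ hdiff hY).sub hpair).congr_deriv ?_
  have hvel := sum_sum_mul_inner_sub_sub (flowCoeff_comm (β := β) hsymm (Y t)) (Y t) Y'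
  rw [sum_sum_eq_sum_offDiag _ fun i => by rw [sub_self, inner_zero_left, mul_zero]] at hvel
  calc
    _ = -(1 / 2) * ∑ e ∈ Finset.univ.offDiag,
          flowCoeff β p (Y t) e.1 e.2 * inner ℝ (Y t e.1 - Y t e.2) (Y' e.1 - Y' e.2) := by
        rw [← Finset.sum_sub_distrib, Finset.mul_sum]
        refine Finset.sum_congr rfl fun e _ => ?_
        have hpos := hβ _ (sq_nonneg ‖Y t e.1 - Y t e.2‖)
        rw [mul_assoc (β _), mul_div_cancel_left₀ _ hpos.ne', flowCoeff]
        ring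
    _ = _ := by
        rw [hvel]
        simp_rw [flowVelocity]
        ring

end Gradient

namespace IsGradFlow

variable {E : Type*} [NormedAddCommGroup E] {β : ℝ → ℝ} {n : ℕ} {p : Fin n → Fin n → ℝ}
  {Y : ℝ → Fin n → E}

lemma hasDerivWithinAt [NormedSpace ℝ E] (hflow : IsGradFlow β p Y) {t : ℝ} (ht : 0 ≤ t)
    (i : Fin n) :
    HasDerivWithinAt (fun u => Y u i) (flowVelocity β p (Y t) i) (Set.Ici 0) t := by
  refine (hflow i t ht).congr_deriv (Finset.sum_filter_of_ne fun j _ hj => ?_)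
  rintro rfl
  exact hj (by rw [sub_self, smul_zero])

lemma sum_eq_sum_initial [NormedSpace ℝ E] (hflow : IsGradFlow β p Y)
    (hsymm : ∀ i j, p i j = p j i) {t : ℝ} (ht : 0 ≤ t) : ∑ i, Y t i = ∑ i, Y 0 i := by
  have hderiv (u : ℝ) (hu : 0 ≤ u) :
      HasDerivWithinAt (fun u => ∑ i, Y u i) 0 (Set.Ici 0) u :=
    (HasDerivWithinAt.fun_sum fun i _ => hflow.hasDerivWithinAt hu i).congr_deriv
      (sum_sum_smul_sub_eq_zero (flowCoeff_comm hsymm (Y u)) (Y u))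
  exact constant_of_has_deriv_right_zero
    (fun u hu => (hderiv u hu.1).continuousWithinAt.mono Set.Icc_subset_Ici_self)
    (fun u hu => (hderiv u hu.1).mono (Set.Ici_subset_Ici.2 hu.1)) t ⟨ht, le_rfl⟩

variable [InnerProductSpace ℝ E]

lemma hasDerivWithinAt_sum_norm_sq (hflow : IsGradFlow β p Y) (hsymm : ∀ i j, p i j = p j i)
    {t : ℝ} (ht : 0 ≤ t) :
    HasDerivWithinAt (fun u => ∑ i, ‖Y u i‖ ^ 2)
      (∑ i, ∑ j, flowCoeff β p (Y t) i j * ‖Y t i - Y t j‖ ^ 2) (Set.Ici 0) t := by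
  refine (HasDerivWithinAt.fun_sum fun i _ =>
    (hflow.hasDerivWithinAt ht i).norm_sq).congr_deriv ?_
  simp_rw [← real_inner_self_eq_norm_sq,
    sum_sum_mul_inner_sub_sub (flowCoeff_comm hsymm (Y t)) (Y t) (Y t), ← Finset.mul_sum]
  exact congrArg _ (Fintype.sum_congr _ _ fun i => real_inner_comm _ _)

variable [Nontrivial (Fin n)]

lemma antitoneOn_crossEntropy (hflow : IsGradFlow β p Y) (hβ : ∀ x, 0 ≤ x → 0 < β x)
    (hdiff : DifferentiableOn ℝ β (Set.Ici 0)) (hsymm : ∀ i j, p i j = p j i)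
    (hpsum : ∑ e ∈ Finset.univ.offDiag, p e.1 e.2 = 1) :
    AntitoneOn (fun t => crossEntropy β p (Y t)) (Set.Ici 0) := by
  have hderiv (t : ℝ) (ht : 0 ≤ t) :=
    hasDerivWithinAt_crossEntropy hβ hdiff hsymm hpsum (hflow.hasDerivWithinAt ht)
  exact antitoneOn_of_hasDerivWithinAt_nonpos (convex_Ici 0)
    (fun t ht => (hderiv t ht).continuousWithinAt)
    (fun t ht => (hderiv t (interior_subset ht)).mono interior_subset)
    fun t _ => neg_nonpos.2 (Finset.sum_nonneg fun i _ => real_inner_self_nonneg)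

theorem exists_pos_forall_le_qfun (hflow : IsGradFlow β p Y) (hβ : ∀ x, 0 ≤ x → 0 < β x)
    (hdiff : DifferentiableOn ℝ β (Set.Ici 0)) (hsymm : ∀ i j, p i j = p j i)
    (hppos : ∀ i j, i ≠ j → 0 < p i j) (hpsum : ∑ e ∈ Finset.univ.offDiag, p e.1 e.2 = 1) :
    ∃ δ : ℝ, 0 < δ ∧ ∀ t, 0 ≤ t → ∀ i j, i ≠ j → δ ≤ qfun β (Y t) i j := by
  have hne : (Finset.univ.offDiag : Finset (Fin n × Fin n)).Nonempty := by
    obtain ⟨i, j, hij⟩ := exists_pair_ne (Fin n)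
    exact ⟨(i, j), by simpa using hij⟩
  obtain ⟨e, -, hmin⟩ := Finset.exists_min_image Finset.univ.offDiag
    (fun e => Real.exp (-crossEntropy β p (Y 0) / p e.1 e.2)) hne
  refine ⟨Real.exp (-crossEntropy β p (Y 0) / p e.1 e.2), Real.exp_pos _, fun t ht i j hij => ?_⟩
  have hp : 0 < p i j := hppos i j hij
  have hanti : crossEntropy β p (Y t) ≤ crossEntropy β p (Y 0) :=
    hflow.antitoneOn_crossEntropy hβ hdiff hsymm hpsum Set.self_mem_Ici ht ht
  calc Real.exp (-crossEntropy β p (Y 0) / p e.1 e.2)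
      ≤ Real.exp (-crossEntropy β p (Y 0) / p i j) := hmin (i, j) (by simpa using hij)
    _ ≤ Real.exp (-crossEntropy β p (Y t) / p i j) := by gcongr
    _ ≤ qfun β (Y t) i j :=
        exp_neg_crossEntropy_div_le_qfun (Y t) hβ (fun i j hij => (hppos i j hij).le) hij hp

end IsGradFlow

section TSNE

/-- The t-SNE kernel `β(x) = (1 + x)⁻¹`. -/
noncomputable def tsneKernel (x : ℝ) : ℝ := (1 + x)⁻¹

lemma tsneKernel_pos {x : ℝ} (hx : 0 ≤ x) : 0 < tsneKernel x := by
  unfold tsneKernel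
  positivity

lemma hasDerivWithinAt_tsneKernel {x : ℝ} (hx : 0 ≤ x) :
    HasDerivWithinAt tsneKernel (-tsneKernel x ^ 2) (Set.Ici 0) x := by
  refine (((hasDerivWithinAt_id x _).const_add 1).fun_inv (by positivity)).congr_deriv ?_
  rw [tsneKernel, inv_pow, neg_div, one_div, id_eq]

lemma lbd_tsneKernel {x : ℝ} (hx : 0 ≤ x) : lbd tsneKernel x = -tsneKernel x := by
  have hpos := (tsneKernel_pos hx).ne'
  rw [lbd, ((hasDerivWithinAt_tsneKernel hx).log hpos).derivWithin (uniqueDiffOn_Ici 0 x hx)]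
  field_simp

lemma tsneKernel_mul_eq_one_sub {x : ℝ} (hx : 0 ≤ x) : tsneKernel x * x = 1 - tsneKernel x := by
  rw [tsneKernel]
  field_simp
  ring

variable {E : Type*} [NormedAddCommGroup E] {n : ℕ} {p : Fin n → Fin n → ℝ}

lemma flowCoeff_tsneKernel_mul_norm_sub_sq (Y : Fin n → E) (i j : Fin n) :
    flowCoeff tsneKernel p Y i j * ‖Y i - Y j‖ ^ 2
      = 4 * (p i j - qfun tsneKernel Y i j) * (tsneKernel (‖Y i - Y j‖ ^ 2) - 1) := by
  rw [flowCoeff, lbd_tsneKernel (sq_nonneg _), mul_assoc, neg_mul,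
    tsneKernel_mul_eq_one_sub (sq_nonneg _), neg_sub]

variable [Nontrivial (Fin n)]

lemma sum_flowCoeff_tsneKernel_mul_norm_sub_sq_le (hp : ∀ i j, i ≠ j → 0 ≤ p i j)
    (hpsum : ∑ e ∈ Finset.univ.offDiag, p e.1 e.2 = 1) (Y : Fin n → E) :
    ∑ i, ∑ j, flowCoeff tsneKernel p Y i j * ‖Y i - Y j‖ ^ 2 ≤ 4 * pairZ tsneKernel Y := by
  have hterm (e : Fin n × Fin n) (he : e ∈ Finset.univ.offDiag) :
      flowCoeff tsneKernel p Y e.1 e.2 * ‖Y e.1 - Y e.2‖ ^ 2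
        ≤ 4 * (qfun tsneKernel Y e.1 e.2 - p e.1 e.2 + p e.1 e.2 * pairZ tsneKernel Y) := by
    have hne : e.1 ≠ e.2 := (Finset.mem_offDiag.1 he).2.2
    have hpZ := mul_le_mul_of_nonneg_left (kernel_le_pairZ Y (fun _ => tsneKernel_pos) hne)
      (hp _ _ hne)
    have hqβ := mul_nonneg (qfun_pos Y (fun _ => tsneKernel_pos) e.1 e.2).le
      (tsneKernel_pos (sq_nonneg ‖Y e.1 - Y e.2‖)).le
    rw [flowCoeff_tsneKernel_mul_norm_sub_sq]
    linarith
  calc ∑ i, ∑ j, flowCoeff tsneKernel p Y i j * ‖Y i - Y j‖ ^ 2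
      = ∑ e ∈ Finset.univ.offDiag, flowCoeff tsneKernel p Y e.1 e.2 * ‖Y e.1 - Y e.2‖ ^ 2 :=
        sum_sum_eq_sum_offDiag _ fun i => by rw [sub_self, norm_zero]; ring
    _ ≤ ∑ e ∈ Finset.univ.offDiag,
          4 * (qfun tsneKernel Y e.1 e.2 - p e.1 e.2 + p e.1 e.2 * pairZ tsneKernel Y) :=
        Finset.sum_le_sum hterm
    _ = 4 * pairZ tsneKernel Y := by
        rw [← Finset.mul_sum, Finset.sum_add_distrib, Finset.sum_sub_distrib, ← Finset.sum_mul,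
          sum_qfun_eq_one Y fun _ => tsneKernel_pos, hpsum]
        ring

lemma pairZ_tsneKernel_mul_le_inv {Y : Fin n → E} {i j : Fin n} {δ : ℝ} (hδ : 0 < δ)
    (hq : δ ≤ qfun tsneKernel Y i j) :
    pairZ tsneKernel Y * (1 + ‖Y i - Y j‖ ^ 2) ≤ δ⁻¹ := by
  have hZ : 0 < pairZ tsneKernel Y := pairZ_pos Y fun _ => tsneKernel_pos
  rw [le_inv_comm₀ (by positivity) hδ, mul_inv_rev]
  exact hq

lemma pairZ_tsneKernel_mul_sum_norm_sq_le [InnerProductSpace ℝ E] {Y : Fin n → E} {δ : ℝ}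
    (hδ : 0 < δ) (hq : ∀ i j, i ≠ j → δ ≤ qfun tsneKernel Y i j) :
    pairZ tsneKernel Y * ∑ i, ‖Y i‖ ^ 2 ≤ (n ^ 2 / 2 + ‖∑ i, Y i‖ ^ 2) / (n * δ) := by
  have hZ : 0 < pairZ tsneKernel Y := pairZ_pos Y fun _ => tsneKernel_pos
  have hn : (0 : ℝ) < n := by exact_mod_cast Fin.pos_iff_nonempty.2 inferInstance
  have hbound {i j : Fin n} (hij : i ≠ j) :
      pairZ tsneKernel Y * (1 + ‖Y i - Y j‖ ^ 2) ≤ δ⁻¹ :=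
    pairZ_tsneKernel_mul_le_inv hδ (hq i j hij)
  have hZle : pairZ tsneKernel Y ≤ δ⁻¹ := by
    obtain ⟨i, j, hij⟩ := exists_pair_ne (Fin n)
    exact (le_mul_of_one_le_right hZ.le (by simp)).trans (hbound hij)
  have hpair (i j : Fin n) : pairZ tsneKernel Y * ‖Y i - Y j‖ ^ 2 ≤ δ⁻¹ := by
    obtain rfl | hij := eq_or_ne i j
    · simpa using hδ.le
    · exact (mul_le_mul_of_nonneg_left (by simp) hZ.le).trans (hbound hij)
  have hsum : pairZ tsneKernel Y * ∑ i, ∑ j, ‖Y i - Y j‖ ^ 2 ≤ n ^ 2 * δ⁻¹ := by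
    simp_rw [Finset.mul_sum]
    refine (Finset.sum_le_sum fun i _ => Finset.sum_le_sum fun j _ => hpair i j).trans_eq ?_
    simp only [Finset.sum_const, Finset.card_univ, Fintype.card_fin, nsmul_eq_mul]
    ring
  have hcenter : pairZ tsneKernel Y * ‖∑ i, Y i‖ ^ 2 ≤ δ⁻¹ * ‖∑ i, Y i‖ ^ 2 :=
    mul_le_mul_of_nonneg_right hZle (sq_nonneg _)
  rw [sum_sum_norm_sub_sq, Fintype.card_fin] at hsum
  rw [mul_comm (n : ℝ), ← div_div, le_div_iff₀ hn, div_eq_mul_inv]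
  linarith

end TSNE

theorem dSdt_bound_tsne_general {E : Type*} [NormedAddCommGroup E] [InnerProductSpace ℝ E]
    {n : ℕ} {p : Fin n → Fin n → ℝ} (hsymm : ∀ i j, p i j = p j i)
    (hppos : ∀ i j, i ≠ j → 0 < p i j)
    (hpsum : (∑ i, ∑ j, if i ≠ j then p i j else (0 : ℝ)) = 1)
    {Y : ℝ → Fin n → E} (hflow : IsGradFlow tsneKernel p Y) :
    ∃ C : ℝ, 0 < C ∧ ∀ t : ℝ, 0 ≤ t →
      derivWithin (fun u => ∑ i, ‖Y u i‖ ^ 2) (Set.Ici 0) t * ∑ i, ‖Y t i‖ ^ 2 ≤ C := by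
  rw [← sum_offDiag_eq_sum_sum_ite] at hpsum
  obtain ⟨⟨i, j⟩, hij, -⟩ := Finset.exists_ne_zero_of_sum_ne_zero (hpsum.trans_ne one_ne_zero)
  have : Nontrivial (Fin n) := ⟨i, j, (Finset.mem_offDiag.1 hij).2.2⟩
  have hn : 0 < n := i.pos
  obtain ⟨δ, hδ, hq⟩ := hflow.exists_pos_forall_le_qfun (fun _ => tsneKernel_pos)
    (fun x hx => (hasDerivWithinAt_tsneKernel hx).differentiableWithinAt) hsymm hppos hpsum
  refine ⟨4 * ((n ^ 2 / 2 + ‖∑ i, Y 0 i‖ ^ 2) / (n * δ)), by positivity, fun t ht => ?_⟩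
  rw [(hflow.hasDerivWithinAt_sum_norm_sq hsymm ht).derivWithin (uniqueDiffOn_Ici 0 t ht),
    ← hflow.sum_eq_sum_initial hsymm ht]
  calc
    _ ≤ 4 * pairZ tsneKernel (Y t) * ∑ i, ‖Y t i‖ ^ 2 := by
        gcongr
        exact sum_flowCoeff_tsneKernel_mul_norm_sub_sq_le (fun i j hij => (hppos i j hij).le)
          hpsum (Y t)
    _ ≤ 4 * ((n ^ 2 / 2 + ‖∑ i, Y t i‖ ^ 2) / (n * δ)) := by
        rw [mul_assoc]
        gcongr
        exact pairZ_tsneKernel_mul_sum_norm_sq_le hδ (hq t ht)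

/-- **Section 3 (t-SNE case).** For `β(x) = (1+x)⁻¹` and a solution `Y(t)` of the gradient
flow with center of mass at the origin, setting `S(t) = Σ_i |y_i(t)|²`, there exist
constants `C', C > 0` such that whenever `S(t) ≥ C'` one has `dS/dt ≤ C / S(t)`. -/
theorem dSdt_bound_tsne
    (s n : ℕ) (hs : 1 ≤ s) (hn : s + 1 < n)
    (p : Fin n → Fin n → ℝ)
    (hsymm : ∀ i j, p i j = p j i)
    (hppos : ∀ i j, i ≠ j → 0 < p i j)
    (hpsum : (∑ i, ∑ j, if i ≠ j then p i j else (0 : ℝ)) = 1)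
    (β : ℝ → ℝ) (hβ : β = fun x => (1 + x)⁻¹)
    (Y : ℝ → Fin n → EuclideanSpace ℝ (Fin s))
    (hflow : IsGradFlow β p Y)
    (hcm : ∀ t : ℝ, 0 ≤ t → ∑ i, Y t i = 0) :
    ∃ C' C : ℝ, 0 < C' ∧ 0 < C ∧
      ∀ t : ℝ, 0 ≤ t → C' ≤ ∑ i, ‖Y t i‖ ^ 2 →
        derivWithin (fun u => ∑ i, ‖Y u i‖ ^ 2) (Set.Ici 0) t
          ≤ C / ∑ i, ‖Y t i‖ ^ 2 := by
  subst hβ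
  obtain ⟨C, hC, hbound⟩ := dSdt_bound_tsne_general hsymm hppos hpsum hflow
  exact ⟨1, C, one_pos, hC, fun t ht hS => (le_div_iff₀ (one_pos.trans_le hS)).2 (hbound t ht)⟩
end

section
/- Let Y(t) be a solution of the gradient flow of the relative entropy. If p_{1j} = p_{2j} for all j > 2 and y_1(0) = y_2(0), then y_1(t) = y_2(t) for all t ≥ 0. -/
open Filter Topology

/-!
The gradient flow is an autonomous equation `Y' = V(Y)` with `V` locally Lipschitz, so a solution is
determined by its initial configuration. Relabelling the points by a permutation that preserves `p`
turns solutions into solutions; hence a configuration invariant under such a permutation stays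
invariant. The transposition of two points with equal affinities to all the others is of this kind.
-/

open Set
open scoped ContDiff

section LocallyLipschitz

variable {α : Type*} [PseudoEMetricSpace α]

theorem locallyLipschitz_comp_of_locallyLipschitzOn {β γ : Type*} [PseudoEMetricSpace β]
    [PseudoEMetricSpace γ] {g : β → γ} {s : Set β} {f : α → β} (hg : LocallyLipschitzOn s g)
    (hf : LocallyLipschitz f) (hfs : ∀ x, f x ∈ s) : LocallyLipschitz fun x => g (f x) :=
  (locallyLipschitzOn_iff_restrict.1 hg).comp (g := fun x => (⟨f x, hfs x⟩ : s)) hf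

theorem locallyLipschitz_pi {ι : Type*} [Fintype ι] {X : ι → Type*}
    [∀ i, PseudoEMetricSpace (X i)] {f : α → ∀ i, X i}
    (hf : ∀ i, LocallyLipschitz fun x => f x i) : LocallyLipschitz f := by
  intro x
  choose K t ht hK using fun i => hf i x
  refine ⟨Finset.univ.sup K, ⋂ i, t i, Filter.iInter_mem.2 ht, fun y hy z hz => ?_⟩
  refine edist_pi_le_iff.2 fun i => (hK i (mem_iInter.1 hy i) (mem_iInter.1 hz i)).trans ?_
  gcongr
  exact Finset.le_sup (Finset.mem_univ i)

theorem locallyLipschitz_finsetSum {ι F : Type*} [SeminormedAddCommGroup F] (s : Finset ι)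
    {f : ι → α → F} (hf : ∀ i ∈ s, LocallyLipschitz (f i)) :
    LocallyLipschitz fun x => ∑ i ∈ s, f i x := by
  classical
  induction s using Finset.induction_on with
  | empty => simpa only [Finset.sum_empty] using LocallyLipschitz.const (0 : F)
  | insert i s his ih =>
    simp only [Finset.sum_insert his]
    exact (hf i (s.mem_insert_self i)).add (ih fun j hj => hf j (Finset.mem_insert_of_mem hj))

theorem locallyLipschitz_smul {𝕜 F : Type*} [RCLike 𝕜] [NormedAddCommGroup F] [NormedSpace 𝕜 F]
    {c : α → 𝕜} {f : α → F} (hc : LocallyLipschitz c) (hf : LocallyLipschitz f) :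
    LocallyLipschitz fun x => c x • f x :=
  (contDiff_smul (𝕜 := 𝕜)).locallyLipschitz.comp (hc.prodMk hf)

theorem locallyLipschitz_inv₀ {𝕜 : Type*} [RCLike 𝕜] {f : α → 𝕜} (hf : LocallyLipschitz f)
    (hf0 : ∀ x, f x ≠ 0) : LocallyLipschitz fun x => (f x)⁻¹ := by
  have inv_locallyLipschitzOn : LocallyLipschitzOn {0}ᶜ (Inv.inv : 𝕜 → 𝕜) := fun z hz => by
    obtain ⟨K, t, ht, hK⟩ := (contDiffAt_inv 𝕜 hz).exists_lipschitzOnWith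
    exact ⟨K, t, mem_nhdsWithin_of_mem_nhds ht, hK⟩
  exact locallyLipschitz_comp_of_locallyLipschitzOn inv_locallyLipschitzOn hf hf0

theorem locallyLipschitz_apply_sub_apply {ι E : Type*} [Fintype ι] [SeminormedAddCommGroup E]
    (i j : ι) : LocallyLipschitz fun Y : ι → E => Y i - Y j :=
  ((LipschitzWith.eval i).sub (LipschitzWith.eval j)).locallyLipschitz

theorem locallyLipschitz_comp_norm_sub_sq {ι E : Type*} [Fintype ι] [SeminormedAddCommGroup E]
    {φ : ℝ → ℝ} (hφ : ContDiffOn ℝ 1 φ (Ici 0)) (i j : ι) :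
    LocallyLipschitz fun Y : ι → E => φ (‖Y i - Y j‖ ^ 2) :=
  locallyLipschitz_comp_of_locallyLipschitzOn (hφ.locallyLipschitzOn (convex_Ici 0))
    (((contDiff_id (𝕜 := ℝ)).pow 2).locallyLipschitz.comp
      (lipschitzWith_one_norm.locallyLipschitz.comp (locallyLipschitz_apply_sub_apply i j)))
    fun _ => mem_Ici.2 (sq_nonneg _)

end LocallyLipschitz

theorem eqOn_Ici_of_hasDerivWithinAt_of_locallyLipschitz {E : Type*} [NormedAddCommGroup E]
    [NormedSpace ℝ E] {V : E → E} (hV : LocallyLipschitz V) {f g : ℝ → E} {a : ℝ}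
    (hf : ∀ t ∈ Ici a, HasDerivWithinAt f (V (f t)) (Ici a) t)
    (hg : ∀ t ∈ Ici a, HasDerivWithinAt g (V (g t)) (Ici a) t) (hfg : f a = g a) :
    EqOn f g (Ici a) := by
  intro b hab
  have continuousOn_of_solution {h : ℝ → E}
      (hh : ∀ t ∈ Ici a, HasDerivWithinAt h (V (h t)) (Ici a) t) : ContinuousOn h (Icc a b) :=
    fun t ht => (hh t ht.1).continuousWithinAt.mono Icc_subset_Ici_self
  have hfc := continuousOn_of_solution hf
  have hgc := continuousOn_of_solution hg
  -- On the compact set swept out by both curves the local Lipschitz bounds are uniform.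
  obtain ⟨K, hK⟩ := hV.locallyLipschitzOn.exists_lipschitzOnWith_of_compact
    ((isCompact_Icc.image_of_continuousOn hfc).union (isCompact_Icc.image_of_continuousOn hgc))
  exact ODE_solution_unique_of_mem_Icc_right (v := fun _ => V) (fun _ _ => hK)
    hfc (fun t ht => (hf t ht.1).mono (Ici_subset_Ici.2 ht.1))
    (fun t ht => Or.inl (mem_image_of_mem f (Ico_subset_Icc_self ht)))
    hgc (fun t ht => (hg t ht.1).mono (Ici_subset_Ici.2 ht.1))
    (fun t ht => Or.inr (mem_image_of_mem g (Ico_subset_Icc_self ht)))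
    hfg ⟨hab, le_rfl⟩

section VectorField

variable {E : Type*} [NormedAddCommGroup E] {n : ℕ} {β : ℝ → ℝ}

theorem contDiffOn_lbd {k m : ℕ∞ω} (hβ : ContDiffOn ℝ m β (Ici 0)) (hβpos : ∀ x, 0 ≤ x → 0 < β x)
    (hkm : k + 1 ≤ m) : ContDiffOn ℝ k (lbd β) (Ici 0) :=
  (hβ.log fun x hx => (hβpos x hx).ne').derivWithin (uniqueDiffOn_Ici 0) hkm

theorem pairZ_pos_s15 (hβpos : ∀ x, 0 ≤ x → 0 < β x) {i j : Fin n} (hij : i ≠ j) (Y : Fin n → E) :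
    0 < pairZ β Y := by
  have term_nonneg (k l : Fin n) : 0 ≤ if k ≠ l then β (‖Y k - Y l‖ ^ 2) else 0 := by
    split_ifs
    exacts [(hβpos _ (sq_nonneg _)).le, le_rfl]
  refine Finset.sum_pos' (fun k _ => Finset.sum_nonneg fun l _ => term_nonneg k l)
    ⟨i, Finset.mem_univ i, Finset.sum_pos' (fun l _ => term_nonneg i l) ⟨j, Finset.mem_univ j, ?_⟩⟩
  rw [if_pos hij]
  exact hβpos _ (sq_nonneg _)

theorem locallyLipschitz_pairZ (hβ : ContDiffOn ℝ 1 β (Ici 0)) :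
    LocallyLipschitz fun Y : Fin n → E => pairZ β Y := by
  refine locallyLipschitz_finsetSum _ fun k _ => locallyLipschitz_finsetSum _ fun l _ => ?_
  split_ifs
  exacts [locallyLipschitz_comp_norm_sub_sq hβ k l, LocallyLipschitz.const 0]

theorem locallyLipschitz_qfun (hβ : ContDiffOn ℝ 1 β (Ici 0)) (hβpos : ∀ x, 0 ≤ x → 0 < β x)
    {i j : Fin n} (hij : i ≠ j) : LocallyLipschitz fun Y : Fin n → E => qfun β Y i j :=
  locallyLipschitz_smul (locallyLipschitz_comp_norm_sub_sq hβ i j)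
    (locallyLipschitz_inv₀ (locallyLipschitz_pairZ hβ) fun Y => (pairZ_pos_s15 hβpos hij Y).ne')

theorem pairZ_comp_perm (Y : Fin n → E) (σ : Equiv.Perm (Fin n)) :
    pairZ β (Y ∘ σ) = pairZ β Y := by
  calc
    pairZ β (Y ∘ σ) = ∑ k, ∑ l, if σ k ≠ σ l then β (‖Y (σ k) - Y (σ l)‖ ^ 2) else 0 := by
      simp only [pairZ, Function.comp_apply, ne_eq, σ.injective.eq_iff]
    _ = ∑ k, ∑ l, if σ k ≠ l then β (‖Y (σ k) - Y l‖ ^ 2) else 0 :=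
      Finset.sum_congr rfl fun k _ =>
        Equiv.sum_comp σ fun l => if σ k ≠ l then β (‖Y (σ k) - Y l‖ ^ 2) else 0
    _ = pairZ β Y := Equiv.sum_comp σ fun k => ∑ l, if k ≠ l then β (‖Y k - Y l‖ ^ 2) else 0

theorem qfun_comp_perm (Y : Fin n → E) (σ : Equiv.Perm (Fin n)) (i j : Fin n) :
    qfun β (Y ∘ σ) i j = qfun β Y (σ i) (σ j) := by
  simp only [qfun, pairZ_comp_perm, Function.comp_apply]

variable [NormedSpace ℝ E] {p : Fin n → Fin n → ℝ} {σ : Equiv.Perm (Fin n)}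

/-- The vector field on configuration space whose integral curves are the solutions of the gradient
flow of the relative entropy. -/
noncomputable def gradFlowField (β : ℝ → ℝ) (p : Fin n → Fin n → ℝ) (Y : Fin n → E) : Fin n → E :=
  fun i => ∑ j ∈ Finset.univ.filter (· ≠ i),
    (4 * (p i j - qfun β Y i j) * lbd β (‖Y i - Y j‖ ^ 2)) • (Y i - Y j)

theorem isGradFlow_iff_hasDerivWithinAt_gradFlowField {Y : ℝ → Fin n → E} :
    IsGradFlow β p Y ↔
      ∀ t ∈ Ici (0 : ℝ), HasDerivWithinAt Y (gradFlowField β p (Y t)) (Ici 0) t := by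
  simp only [hasDerivWithinAt_pi]
  exact ⟨fun h t ht i => h i t ht, fun h i t ht => h t ht i⟩

theorem locallyLipschitz_gradFlowField (hβ : ContDiffOn ℝ 2 β (Ici 0))
    (hβpos : ∀ x, 0 ≤ x → 0 < β x) (p : Fin n → Fin n → ℝ) :
    LocallyLipschitz (gradFlowField β p : (Fin n → E) → Fin n → E) := by
  refine locallyLipschitz_pi fun i => locallyLipschitz_finsetSum _ fun j hj => ?_
  have hij : i ≠ j := (Finset.mem_filter.1 hj).2.symm
  have hq : LocallyLipschitz fun Y : Fin n → E => qfun β Y i j :=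
    locallyLipschitz_qfun (hβ.of_le one_le_two) hβpos hij
  have hlbd : LocallyLipschitz fun Y : Fin n → E => lbd β (‖Y i - Y j‖ ^ 2) :=
    locallyLipschitz_comp_norm_sub_sq (contDiffOn_lbd hβ hβpos one_add_one_eq_two.le) i j
  have hcoeff : LocallyLipschitz fun Y : Fin n → E => 4 * (p i j - qfun β Y i j) :=
    locallyLipschitz_smul (.const (4 : ℝ)) (LocallyLipschitz.sub (.const (p i j)) hq)
  exact locallyLipschitz_smul (locallyLipschitz_smul hcoeff hlbd)
    (locallyLipschitz_apply_sub_apply i j)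

theorem gradFlowField_comp_perm (hp : ∀ i j, i ≠ j → p (σ i) (σ j) = p i j) (Y : Fin n → E) :
    gradFlowField β p (Y ∘ σ) = gradFlowField β p Y ∘ σ := by
  funext i
  simp only [gradFlowField, Function.comp_apply]
  refine Finset.sum_equiv σ (fun j => ?_) fun j hj => ?_
  · simp only [Finset.mem_filter_univ, ne_eq, σ.injective.eq_iff]
  · rw [qfun_comp_perm, hp i j (Finset.mem_filter.1 hj).2.symm]

end VectorField

namespace IsGradFlow

variable {E : Type*} [NormedAddCommGroup E] [NormedSpace ℝ E] {n : ℕ} {β : ℝ → ℝ}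
  {p : Fin n → Fin n → ℝ} {Y X : ℝ → Fin n → E} {σ : Equiv.Perm (Fin n)}

theorem eqOn_Ici (hβ : ContDiffOn ℝ 2 β (Ici 0)) (hβpos : ∀ x, 0 ≤ x → 0 < β x)
    (hX : IsGradFlow β p X) (hY : IsGradFlow β p Y) (h0 : X 0 = Y 0) : EqOn X Y (Ici 0) :=
  eqOn_Ici_of_hasDerivWithinAt_of_locallyLipschitz (locallyLipschitz_gradFlowField hβ hβpos p)
    (isGradFlow_iff_hasDerivWithinAt_gradFlowField.1 hX)
    (isGradFlow_iff_hasDerivWithinAt_gradFlowField.1 hY) h0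

theorem comp_perm (hY : IsGradFlow β p Y) (hp : ∀ i j, i ≠ j → p (σ i) (σ j) = p i j) :
    IsGradFlow β p fun t => Y t ∘ σ := by
  rw [isGradFlow_iff_hasDerivWithinAt_gradFlowField] at hY ⊢
  intro t ht
  rw [gradFlowField_comp_perm hp]
  exact hasDerivWithinAt_pi.2 fun i => hasDerivWithinAt_pi.1 (hY t ht) (σ i)

theorem comp_perm_eq_self (hβ : ContDiffOn ℝ 2 β (Ici 0)) (hβpos : ∀ x, 0 ≤ x → 0 < β x)
    (hY : IsGradFlow β p Y) (hp : ∀ i j, i ≠ j → p (σ i) (σ j) = p i j) (h0 : Y 0 ∘ σ = Y 0)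
    {t : ℝ} (ht : 0 ≤ t) : Y t ∘ σ = Y t :=
  eqOn_Ici hβ hβpos (hY.comp_perm hp) hY h0 ht

end IsGradFlow

theorem apply_swap_eq_of_symm {ι R : Type*} [DecidableEq ι] {p : ι → ι → R} {a b : ι}
    (hsymm : ∀ i j, p i j = p j i) (hp : ∀ j, j ≠ a → j ≠ b → p a j = p b j) {i j : ι}
    (hij : i ≠ j) : p (Equiv.swap a b i) (Equiv.swap a b j) = p i j := by
  grind

theorem comp_swap_eq_self {ι M : Type*} [DecidableEq ι] {f : ι → M} {a b : ι} (h : f a = f b) :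
    f ∘ Equiv.swap a b = f := by
  grind

theorem coinciding_points_remain_equal_general {E : Type*} [NormedAddCommGroup E]
    [NormedSpace ℝ E] {n : ℕ} {p : Fin n → Fin n → ℝ} {β : ℝ → ℝ} {Y : ℝ → Fin n → E}
    {a b : Fin n} (hsymm : ∀ i j, p i j = p j i) (hβpos : ∀ x, 0 ≤ x → 0 < β x)
    (hβ : ContDiffOn ℝ 2 β (Ici 0)) (hY : IsGradFlow β p Y)
    (hp : ∀ j, j ≠ a → j ≠ b → p a j = p b j) (h0 : Y 0 a = Y 0 b) {t : ℝ} (ht : 0 ≤ t) :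
    Y t a = Y t b := by
  have hswap : Y t ∘ Equiv.swap a b = Y t :=
    hY.comp_perm_eq_self hβ hβpos (fun _ _ => apply_swap_eq_of_symm hsymm hp)
      (comp_swap_eq_self h0) ht
  simpa only [Function.comp_apply, Equiv.swap_apply_right] using congrFun hswap b

/-- **Proof of Theorem 1.5 (first step).** If `p_{1j} = p_{2j}` for all `j > 2` and the
first two points coincide initially, then they coincide for all time. -/
theorem coinciding_points_remain_equal
    (s n : ℕ) (hs : 1 ≤ s) (hn : s + 1 < n)
    (p : Fin n → Fin n → ℝ)
    (hsymm : ∀ i j, p i j = p j i)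
    (hppos : ∀ i j, i ≠ j → 0 < p i j)
    (hpsum : (∑ i, ∑ j, if i ≠ j then p i j else (0 : ℝ)) = 1)
    (β : ℝ → ℝ)
    (hβpos : ∀ x, 0 ≤ x → 0 < β x)
    (hβsmooth : ContDiffOn ℝ (⊤ : ℕ∞) β (Set.Ici 0))
    (hβanti : AntitoneOn β (Set.Ici 0))
    (hβbdd : ∃ M : ℝ, ∀ x, 0 ≤ x → |lbd β x| ≤ M)
    (Y : ℝ → Fin n → EuclideanSpace ℝ (Fin s))
    (hflow : IsGradFlow β p Y)
    -- `p_{1j} = p_{2j}` for all `j > 2` (indices `0`, `1` in 0-based numbering)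
    (hp12 : ∀ j : Fin n, 1 < (j : ℕ) → p ⟨0, by omega⟩ j = p ⟨1, by omega⟩ j)
    -- `y_1 = y_2` initially
    (hinit : Y 0 ⟨0, by omega⟩ = Y 0 ⟨1, by omega⟩) :
    ∀ t : ℝ, 0 ≤ t → Y t ⟨0, by omega⟩ = Y t ⟨1, by omega⟩ := by
  intro t ht
  exact coinciding_points_remain_equal_general hsymm hβpos (contDiffOn_infty.1 hβsmooth 2) hflow
    (fun j hj0 hj1 => hp12 j (by grind)) hinit ht
end
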